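/- Lower bound for the heat kernel surface integral (proof of Theorem 3.2): Let n ≥ 2, R > 0, and let Γ(x,t) = (4πt)^{−n/2} exp(−|x|²/(4t)) be the fundamental solution of the heat equation in ℝⁿ. Let σ denote the (n−1)-dimensional surface measure on the sphere S_R = {y ∈ ℝⁿ : |y| = R}. Then there exist constants c > 0 and s₀ > 0 such that for every x ∈ S_R and every s ∈ (0, s₀): ∫_{S_R} Γ(x−y, s) dσ(y) ≥ c s^{−1/2}. -/

import Mathlib

/-!
The kernel is nonnegative and is at least `(4πs)^(-n/2) e^(-1/4)` on the ball of radius `√s` around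
its pole, so the surface integral is at least this number times the measure of the cap
`S_R ∩ closedBall x √s`. Orthogonal projection to the hyperplane `x^⊥` does not increase Hausdorff
measure and maps the cap onto a set containing the ball of radius `√s / 2`, whose
`(n-1)`-dimensional measure is a constant multiple of `s^((n-1)/2)`; the product of the two powers
of `s` is `s^(-1/2)`.

The Bochner integral of a non-integrable function is `0`, so one also needs the sphere to have
finite surface measure: it is compact and, near each of its points `x`, a `C¹` graph over `x^⊥`.
-/

open Set Real Metric Filter Topology MeasureTheory

/-- The fundamental solution of the heat equation in `ℝⁿ`:
`Γ(x,t) = (4πt)^{−n/2} exp(−|x|²/(4t))`. -/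
noncomputable def heatKernel (n : ℕ) (x : EuclideanSpace ℝ (Fin n)) (t : ℝ) : ℝ :=
  (4 * π * t) ^ (-(n : ℝ) / 2) * Real.exp (-‖x‖ ^ 2 / (4 * t))

open Module

section Hemisphere

variable {E : Type*} [NormedAddCommGroup E] [InnerProductSpace ℝ E]

/-- The parametrization of the open hemisphere centred at `x` of the sphere of radius `‖x‖` as a
graph over the ball of radius `‖x‖` in the hyperplane `x^⊥`. Outside that ball the square root is
`0`, and the values do not lie on the sphere. -/
noncomputable def hemisphereMap (x : E) (z : (ℝ ∙ x)ᗮ) : E :=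
  z + √(1 - (‖z‖ / ‖x‖) ^ 2) • x

lemma norm_orthogonal_add_smul_sq (x : E) (z : (ℝ ∙ x)ᗮ) (a : ℝ) :
    ‖(z : E) + a • x‖ ^ 2 = ‖z‖ ^ 2 + (a * ‖x‖) ^ 2 := by
  have hzx : inner ℝ (z : E) x = 0 := Submodule.mem_orthogonal_singleton_iff_inner_left.1 z.2
  rw [norm_add_sq_real, inner_smul_right, hzx, norm_smul, mul_pow, mul_pow, Real.norm_eq_abs,
    sq_abs, Submodule.coe_norm]
  ring

lemma sqrt_one_sub_div_sq_mul_sq {b c : ℝ} (hb : 0 ≤ b) (hbc : b ≤ c) :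
    (√(1 - (b / c) ^ 2) * c) ^ 2 = c ^ 2 - b ^ 2 := by
  have hc : 0 ≤ c := hb.trans hbc
  have hle : (b / c) ^ 2 ≤ 1 := pow_le_one₀ (by positivity) (div_le_one_of_le₀ hbc hc)
  have hcancel : b / c * c = b := div_mul_cancel_of_imp fun h ↦ le_antisymm (h ▸ hbc) hb
  rw [mul_pow, Real.sq_sqrt (sub_nonneg.2 hle), sub_mul, ← mul_pow, hcancel, one_mul]

lemma norm_hemisphereMap {x : E} {z : (ℝ ∙ x)ᗮ} (hz : ‖z‖ ≤ ‖x‖) :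
    ‖hemisphereMap x z‖ = ‖x‖ := by
  rw [← sq_eq_sq₀ (norm_nonneg _) (norm_nonneg _), hemisphereMap, norm_orthogonal_add_smul_sq,
    sqrt_one_sub_div_sq_mul_sq (norm_nonneg z) hz, add_sub_cancel]

lemma norm_hemisphereMap_sub_sq_le {x : E} {z : (ℝ ∙ x)ᗮ} (hz : ‖z‖ ≤ ‖x‖) :
    ‖hemisphereMap x z - x‖ ^ 2 ≤ 2 * ‖z‖ ^ 2 := by
  set a := √(1 - (‖z‖ / ‖x‖) ^ 2)
  have ha_nonneg : 0 ≤ a := Real.sqrt_nonneg _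
  have ha_le_one : a ≤ 1 := Real.sqrt_le_one.2 (sub_le_self _ (sq_nonneg _))
  calc ‖hemisphereMap x z - x‖ ^ 2 = ‖(z : E) + (a - 1) • x‖ ^ 2 := by
        rw [hemisphereMap, sub_smul, one_smul, add_sub_assoc]
    _ = ‖z‖ ^ 2 + (1 - a) ^ 2 * ‖x‖ ^ 2 := by rw [norm_orthogonal_add_smul_sq]; ring
    _ ≤ ‖z‖ ^ 2 + (1 - a ^ 2) * ‖x‖ ^ 2 := by gcongr; nlinarith
    _ = 2 * ‖z‖ ^ 2 := by
        linear_combination -sqrt_one_sub_div_sq_mul_sq (norm_nonneg z) hz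

lemma orthogonalProjectionOnto_hemisphereMap (x : E) (z : (ℝ ∙ x)ᗮ) :
    (ℝ ∙ x)ᗮ.orthogonalProjectionOnto (hemisphereMap x z) = z := by
  rw [hemisphereMap, map_add, map_smul,
    Submodule.orthogonalProjectionOnto_orthogonalComplement_singleton_eq_zero, smul_zero, add_zero,
    Submodule.orthogonalProjectionOnto_mem_subspace_eq_self]

lemma hemisphereMap_orthogonalProjectionOnto {x y : E} (hy : ‖y‖ = ‖x‖) (hxy : 0 < inner ℝ x y) :
    hemisphereMap x ((ℝ ∙ x)ᗮ.orthogonalProjectionOnto y) = y := by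
  have hx : 0 < ‖x‖ := norm_pos_iff.2 fun h ↦ by simp [h] at hxy
  set a := inner ℝ x y / ‖x‖ ^ 2 with ha
  set z := (ℝ ∙ x)ᗮ.orthogonalProjectionOnto y with hz
  have hdecomp : (z : E) + a • x = y := by
    simp [hz, ha, Submodule.orthogonalProjectionOnto_orthogonal, Submodule.starProjection_singleton]
  have hheight : 1 - (‖z‖ / ‖x‖) ^ 2 = a ^ 2 := by
    have hpyth := norm_orthogonal_add_smul_sq x z a
    rw [hdecomp, hy] at hpyth
    field_simp
    linear_combination hpyth
  rw [hemisphereMap, hheight, Real.sqrt_sq (by positivity), hdecomp]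

lemma contDiffAt_hemisphereMap {n : WithTop ℕ∞} {x : E} {z : (ℝ ∙ x)ᗮ} (hz : ‖z‖ < ‖x‖) :
    ContDiffAt ℝ n (hemisphereMap x) z := by
  have hpos : 1 - ‖z‖ ^ 2 / ‖x‖ ^ 2 ≠ 0 := by
    rw [← div_pow]
    exact (sub_pos.2 <| pow_lt_one₀ (by positivity)
      ((div_lt_one ((norm_nonneg z).trans_lt hz)).2 hz) two_ne_zero).ne'
  unfold hemisphereMap
  simp only [div_pow]
  exact (Submodule.subtypeL _).contDiff.contDiffAt.add <| ContDiffAt.smul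
    ((contDiffAt_const.sub ((contDiff_norm_sq ℝ).contDiffAt.div_const _)).sqrt hpos)
    contDiffAt_const

lemma hemisphereMap_image_mem_nhdsWithin {x : E} (hx : x ≠ 0) {t : Set (ℝ ∙ x)ᗮ} (ht : t ∈ 𝓝 0) :
    hemisphereMap x '' t ∈ 𝓝[sphere 0 ‖x‖] x := by
  have hproj : ∀ᶠ y in 𝓝 x, (ℝ ∙ x)ᗮ.orthogonalProjectionOnto y ∈ t := by
    refine (ContinuousLinearMap.continuous _).continuousAt.eventually_mem ?_
    rwa [Submodule.orthogonalProjectionOnto_orthogonalComplement_singleton_eq_zero]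
  have hinner : ∀ᶠ y in 𝓝 x, 0 < inner ℝ x y :=
    (show Continuous (inner ℝ x) by fun_prop).continuousAt.eventually_const_lt
      (real_inner_self_pos.2 hx)
  filter_upwards [mem_nhdsWithin_of_mem_nhds hproj, mem_nhdsWithin_of_mem_nhds hinner,
    self_mem_nhdsWithin] with y hyt hxy hy
  exact ⟨_, hyt, hemisphereMap_orthogonalProjectionOnto (mem_sphere_zero_iff_norm.1 hy) hxy⟩

lemma closedBall_subset_orthogonalProjectionOnto_image {x : E} {r : ℝ} (hr : 0 ≤ r)
    (hrx : r ≤ 2 * ‖x‖) :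
    closedBall 0 (r / 2) ⊆
      (ℝ ∙ x)ᗮ.orthogonalProjectionOnto '' (sphere 0 ‖x‖ ∩ closedBall x r) := by
  intro z hz
  rw [mem_closedBall_zero_iff] at hz
  have hzx : ‖z‖ ≤ ‖x‖ := by linarith
  refine ⟨hemisphereMap x z, ⟨?_, ?_⟩, orthogonalProjectionOnto_hemisphereMap x z⟩
  · exact mem_sphere_zero_iff_norm.2 (norm_hemisphereMap hzx)
  · rw [mem_closedBall_iff_norm, ← sq_le_sq₀ (norm_nonneg _) hr]
    calc ‖hemisphereMap x z - x‖ ^ 2 ≤ 2 * ‖z‖ ^ 2 := norm_hemisphereMap_sub_sq_le hzx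
      _ ≤ 2 * (r / 2) ^ 2 := by gcongr
      _ ≤ r ^ 2 := by nlinarith [sq_nonneg r]

end Hemisphere

section HausdorffMeasure

lemma exists_mem_nhds_hausdorffMeasure_image_lt_top {F G : Type*}
    [NormedAddCommGroup F] [NormedSpace ℝ F] [FiniteDimensional ℝ F]
    [NormedAddCommGroup G] [NormedSpace ℝ G] [MeasurableSpace G] [BorelSpace G]
    {f : F → G} {a : F} (hf : ContDiffAt ℝ 1 f a) :
    ∃ t ∈ 𝓝 a, μH[(finrank ℝ F : ℝ)] (f '' t) < ⊤ := by
  borelize F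
  obtain ⟨K, t, ht, hK⟩ := hf.exists_lipschitzOnWith
  refine ⟨t ∩ ball a 1, inter_mem ht (ball_mem_nhds a one_pos), ?_⟩
  calc μH[(finrank ℝ F : ℝ)] (f '' (t ∩ ball a 1))
      ≤ K ^ (finrank ℝ F : ℝ) * μH[(finrank ℝ F : ℝ)] (t ∩ ball a 1) :=
        (hK.mono inter_subset_left).hausdorffMeasure_image_le (Nat.cast_nonneg _)
    _ ≤ K ^ (finrank ℝ F : ℝ) * μH[(finrank ℝ F : ℝ)] (ball a 1) := by
        gcongr; exact inter_subset_right
    _ < ⊤ := ENNReal.mul_lt_top (ENNReal.rpow_lt_top_of_nonneg (Nat.cast_nonneg _) (by simp))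
        measure_ball_lt_top

lemma hausdorffMeasure_real_closedBall {F : Type*} [NormedAddCommGroup F] [InnerProductSpace ℝ F]
    [FiniteDimensional ℝ F] [MeasurableSpace F] [BorelSpace F] {d : ℕ} (hd : finrank ℝ F = d)
    (z : F) {r : ℝ} (hr : 0 ≤ r) :
    μH[(d : ℝ)].real (closedBall z r) =
      r ^ d * μH[(d : ℝ)].real (closedBall (0 : EuclideanSpace ℝ (Fin d)) 1) := by
  subst hd
  have hunit := (stdOrthonormalBasis ℝ F).repr.toIsometryEquiv.hausdorffMeasure_image
    (finrank ℝ F : ℝ) (closedBall (0 : F) 1)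
  rw [IsometryEquiv.image_closedBall, LinearIsometryEquiv.coe_toIsometryEquiv, map_zero] at hunit
  rw [Measure.addHaar_real_closedBall' _ z hr, measureReal_def, measureReal_def, hunit]

variable {E : Type*} [NormedAddCommGroup E] [InnerProductSpace ℝ E] [MeasurableSpace E]
  [BorelSpace E] {d : ℕ} [Fact (finrank ℝ E = d + 1)]

lemma hausdorffMeasure_sphere_lt_top (R : ℝ) : μH[(d : ℝ)] (sphere (0 : E) R) < ⊤ := by
  have : FiniteDimensional ℝ E := .of_fact_finrank_eq_succ d
  rcases eq_or_ne R 0 with rfl | hR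
  · rw [sphere_zero]
    exact (Measure.hausdorffMeasure_le_one_of_subsingleton subsingleton_singleton
      (Nat.cast_nonneg d)).trans_lt ENNReal.one_lt_top
  refine (isCompact_sphere _ _).measure_lt_top_of_nhdsWithin fun x hx ↦ ?_
  obtain rfl : ‖x‖ = R := mem_sphere_zero_iff_norm.1 hx
  have hx0 : x ≠ 0 := norm_ne_zero_iff.1 hR
  obtain ⟨t, ht, hfin⟩ := exists_mem_nhds_hausdorffMeasure_image_lt_top
    (contDiffAt_hemisphereMap (x := x) (z := 0) (by simpa using hx0))
  rw [Submodule.finrank_orthogonal_span_singleton (n := d) hx0] at hfin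
  exact ⟨_, hemisphereMap_image_mem_nhdsWithin hx0 ht, hfin⟩

lemma le_hausdorffMeasure_real_sphere_inter_closedBall {x : E} (hx : x ≠ 0) {r : ℝ} (hr : 0 ≤ r)
    (hrx : r ≤ 2 * ‖x‖) :
    (r / 2) ^ d * μH[(d : ℝ)].real (closedBall (0 : EuclideanSpace ℝ (Fin d)) 1) ≤
      μH[(d : ℝ)].real (sphere 0 ‖x‖ ∩ closedBall x r) := by
  have : FiniteDimensional ℝ E := .of_fact_finrank_eq_succ d
  rw [← hausdorffMeasure_real_closedBall
    (Submodule.finrank_orthogonal_span_singleton (𝕜 := ℝ) (n := d) hx) 0 (by positivity)]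
  refine ENNReal.toReal_mono
    (measure_ne_top_of_subset inter_subset_left (hausdorffMeasure_sphere_lt_top _).ne) ?_
  exact (measure_mono (closedBall_subset_orthogonalProjectionOnto_image hr hrx)).trans
    (hausdorffMeasure_orthogonalProjectionOnto_le _ _ _ (Nat.cast_nonneg d))

end HausdorffMeasure

section HeatKernel

variable {n : ℕ} {x : EuclideanSpace ℝ (Fin n)} {s : ℝ}

lemma heatKernel_nonneg (hs : 0 ≤ s) : 0 ≤ heatKernel n x s := by
  unfold heatKernel; positivity

lemma heatKernel_le (hs : 0 ≤ s) : heatKernel n x s ≤ (4 * π * s) ^ (-(n : ℝ) / 2) := by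
  refine mul_le_of_le_one_right (by positivity) (Real.exp_le_one_iff.2 ?_)
  exact div_nonpos_of_nonpos_of_nonneg (neg_nonpos.2 (sq_nonneg _)) (by positivity)

lemma le_heatKernel (hs : 0 < s) (hx : ‖x‖ ≤ √s) :
    (4 * π * s) ^ (-(n : ℝ) / 2) * Real.exp (-1 / 4) ≤ heatKernel n x s := by
  have hxs : ‖x‖ ^ 2 ≤ s := (Real.le_sqrt (norm_nonneg x) hs.le).1 hx
  unfold heatKernel
  gcongr ?_ * Real.exp ?_
  rw [div_le_div_iff₀ four_pos (by positivity)]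
  linarith

lemma continuous_heatKernel (n : ℕ) (s : ℝ) : Continuous fun x ↦ heatKernel n x s := by
  unfold heatKernel; fun_prop

lemma le_integral_heatKernel (μ : Measure (EuclideanSpace ℝ (Fin n))) [IsFiniteMeasure μ]
    (x : EuclideanSpace ℝ (Fin n)) (hs : 0 < s) :
    (4 * π * s) ^ (-(n : ℝ) / 2) * Real.exp (-1 / 4) * μ.real (closedBall x √s) ≤
      ∫ y, heatKernel n (x - y) s ∂μ := by
  have hint : Integrable (fun y ↦ heatKernel n (x - y) s) μ := by
    refine .of_bound ((continuous_heatKernel n s).comp (continuous_const.sub continuous_id)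
      |>.aestronglyMeasurable) ((4 * π * s) ^ (-(n : ℝ) / 2)) (.of_forall fun y ↦ ?_)
    rw [Real.norm_of_nonneg (heatKernel_nonneg hs.le)]
    exact heatKernel_le hs.le
  set ε := (4 * π * s) ^ (-(n : ℝ) / 2) * Real.exp (-1 / 4)
  have hsub : closedBall x √s ⊆ {y | ε ≤ heatKernel n (x - y) s} := fun y hy ↦
    le_heatKernel hs (mem_closedBall_iff_norm'.1 hy)
  calc ε * μ.real (closedBall x √s) ≤ ε * μ.real {y | ε ≤ heatKernel n (x - y) s} := by
        gcongr; finiteness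
    _ ≤ ∫ y, heatKernel n (x - y) s ∂μ :=
        mul_meas_ge_le_integral_of_nonneg (.of_forall fun _ ↦ heatKernel_nonneg hs.le) hint ε

lemma mul_rpow_neg_div_two_mul_sqrt_pow {a : ℝ} (ha : 0 ≤ a) (hs : 0 < s) (d : ℕ) :
    (a * s) ^ (-((d + 1 : ℕ) : ℝ) / 2) * √s ^ d = a ^ (-((d + 1 : ℕ) : ℝ) / 2) / √s := by
  rw [Real.mul_rpow ha hs.le, mul_assoc, div_eq_mul_inv _ √s, Real.sqrt_eq_rpow,
    ← Real.rpow_mul_natCast hs.le, ← Real.rpow_add hs, ← Real.rpow_neg hs.le]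
  congr 2
  push_cast
  ring

lemma le_setIntegral_sphere_heatKernel {d : ℕ} {x : EuclideanSpace ℝ (Fin (d + 1))} (hs : 0 < s)
    (hsx : s ≤ (2 * ‖x‖) ^ 2) :
    (4 * π) ^ (-((d + 1 : ℕ) : ℝ) / 2) * Real.exp (-1 / 4) *
        (μH[(d : ℝ)].real (closedBall (0 : EuclideanSpace ℝ (Fin d)) 1) / 2 ^ d) / √s ≤
      ∫ y in sphere 0 ‖x‖, heatKernel (d + 1) (x - y) s ∂μH[(d : ℝ)] := by
  have : Fact (finrank ℝ (EuclideanSpace ℝ (Fin (d + 1))) = d + 1) := ⟨finrank_euclideanSpace_fin⟩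
  have : IsFiniteMeasure
      (μH[(d : ℝ)].restrict (sphere (0 : EuclideanSpace ℝ (Fin (d + 1))) ‖x‖)) :=
    isFiniteMeasure_restrict.2 (hausdorffMeasure_sphere_lt_top _).ne
  have hx : x ≠ 0 := by
    rintro rfl
    rw [norm_zero, mul_zero, zero_pow two_ne_zero] at hsx
    exact hsx.not_gt hs
  have hsqrt : √s ≤ 2 * ‖x‖ := Real.sqrt_le_iff.2 ⟨by positivity, hsx⟩
  set κ := μH[(d : ℝ)].real (closedBall (0 : EuclideanSpace ℝ (Fin d)) 1)
  set A := (4 * π * s) ^ (-((d + 1 : ℕ) : ℝ) / 2) * Real.exp (-1 / 4) with hA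
  calc (4 * π) ^ (-((d + 1 : ℕ) : ℝ) / 2) * Real.exp (-1 / 4) * (κ / 2 ^ d) / √s
      = A * ((√s / 2) ^ d * κ) := by
        rw [div_pow, hA]
        linear_combination (-(Real.exp (-1 / 4) * κ / 2 ^ d)) *
          mul_rpow_neg_div_two_mul_sqrt_pow (a := 4 * π) (by positivity) hs d
    _ ≤ A * μH[(d : ℝ)].real (sphere 0 ‖x‖ ∩ closedBall x √s) := by
        gcongr
        exact le_hausdorffMeasure_real_sphere_inter_closedBall hx (Real.sqrt_nonneg s) hsqrt
    _ ≤ ∫ y in sphere 0 ‖x‖, heatKernel (d + 1) (x - y) s ∂μH[(d : ℝ)] := by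
        rw [inter_comm, ← measureReal_restrict_apply measurableSet_closedBall]
        exact le_integral_heatKernel _ x hs

end HeatKernel

theorem heat_kernel_surface_integral_lower_bound_general (n : ℕ) :
    ∃ c : ℝ, 0 < c ∧ ∀ x : EuclideanSpace ℝ (Fin n), ∀ s ∈ Ioc 0 ((2 * ‖x‖) ^ 2),
      c / √s ≤ ∫ y in sphere 0 ‖x‖, heatKernel n (x - y) s ∂(μH[(n : ℝ) - 1]) := by
  rcases n with _ | d
  · refine ⟨1, one_pos, fun x s hs ↦ ?_⟩
    simp [Subsingleton.elim x 0] at hs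
  have hball : 0 < μH[(d : ℝ)].real (closedBall (0 : EuclideanSpace ℝ (Fin d)) 1) :=
    ENNReal.toReal_pos (measure_closedBall_pos _ _ one_pos).ne' measure_closedBall_lt_top.ne
  refine ⟨(4 * π) ^ (-((d + 1 : ℕ) : ℝ) / 2) * Real.exp (-1 / 4) *
    (μH[(d : ℝ)].real (closedBall (0 : EuclideanSpace ℝ (Fin d)) 1) / 2 ^ d), by positivity,
    fun x s hs ↦ ?_⟩
  have hdim : ((d + 1 : ℕ) : ℝ) - 1 = d := by simp
  rw [hdim]
  exact le_setIntegral_sphere_heatKernel hs.1 hs.2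

/-- Lower bound for the heat kernel surface integral (proof of Theorem 3.2): for the
sphere `S_R ⊂ ℝⁿ` (`n ≥ 2`) with its `(n−1)`-dimensional surface (Hausdorff) measure,
there are `c > 0` and `s₀ > 0` such that for all `x ∈ S_R` and `s ∈ (0, s₀)`:
`∫_{S_R} Γ(x−y, s) dσ(y) ≥ c s^{−1/2}`. -/
theorem heat_kernel_surface_integral_lower_bound {n : ℕ} (hn : 2 ≤ n) {R : ℝ}
    (hR : 0 < R) :
    ∃ c : ℝ, 0 < c ∧ ∃ s₀ : ℝ, 0 < s₀ ∧
      ∀ x ∈ sphere (0 : EuclideanSpace ℝ (Fin n)) R, ∀ s ∈ Ioo (0 : ℝ) s₀,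
        c / Real.sqrt s ≤
          ∫ y in sphere (0 : EuclideanSpace ℝ (Fin n)) R,
            heatKernel n (x - y) s ∂(μH[(n : ℝ) - 1]) := by
  obtain ⟨c, hc, hbound⟩ := heat_kernel_surface_integral_lower_bound_general n
  refine ⟨c, hc, (2 * R) ^ 2, by positivity, fun x hx s hs ↦ ?_⟩
  obtain rfl := mem_sphere_zero_iff_norm.1 hx
  exact hbound x s ⟨hs.1, hs.2.le⟩
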